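/- arXiv:2010.00546 — 2 statements merged into one kernel-verified Lean document; each statement's English description precedes it below -/
import Mathlib

section
/- For every α ∈ (0,1], λ > 0 and μ ≥ 0, the Lévy–Khintchine integral with the Mittag-Leffler density as Lévy density evaluates to ∫_0^∞ (1 − e^{−τμ}) · λ τ^{α−1} E_{α,α}(−λ τ^α) dτ = μ^α/(λ + μ^α). -/
open MeasureTheory

/-- Two-parameter Mittag-Leffler function `E_{a,b}(z) = Σ_{m=0}^∞ z^m / Γ(a m + b)`. -/
noncomputable def mittagLeffler (a b z : ℝ) : ℝ :=
  ∑' m : ℕ, z ^ m / Real.Gamma (a * m + b)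

/-!
Let `f` be the Mittag-Leffler density and `κ(t) = λ t^(α-1) / Γ(α)`. Integrating the series of `f`
against `κ` term by term shows that `f` is the resolvent of `κ`: `f + f * κ = κ` on `(0, ∞)`.
For `α ≤ 1` the kernel `κ` is log-convex, which forces its resolvent to be positive: at a first
zero `T` of `f`, comparing the equation at `T` with the equation at a point slightly to the left
of `T` gives `f(T) > 0`. Hence `0 ≤ f ≤ κ`, so the Laplace transform of `f` exists on `(0, ∞)`, and
the convolution equation gives it as `L / (1 + L) = λ / (λ + s^α)`, where `L(s) = λ / s^α` is the
transform of `κ`. Letting `s → 0` shows that `f` has total mass one, and the Lévy–Khintchine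
integral is the total mass minus the Laplace transform at `μ`.
-/

open Set Filter Topology

section Gamma

theorem rpow_sub_one_mul_exp_neg_le_Gamma {R y : ℝ} (hR : 0 ≤ R) (hy : 1 ≤ y) :
    R ^ (y - 1) * Real.exp (-R) ≤ Real.Gamma y := by
  have hΓ := Real.GammaIntegral_convergent (zero_lt_one.trans_le hy)
  have hsub : Ioi R ⊆ Ioi 0 := Ioi_subset_Ioi hR
  calc R ^ (y - 1) * Real.exp (-R)
      = ∫ u in Ioi R, R ^ (y - 1) * Real.exp (-u) := by
        rw [integral_const_mul, integral_exp_neg_Ioi]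
    _ ≤ ∫ u in Ioi R, Real.exp (-u) * u ^ (y - 1) := by
        refine setIntegral_mono_on ((integrableOn_exp_neg_Ioi R).const_mul _) (hΓ.mono_set hsub)
          measurableSet_Ioi fun u hu => ?_
        rw [mul_comm]
        gcongr
        exact le_of_lt hu
    _ ≤ ∫ u in Ioi 0, Real.exp (-u) * u ^ (y - 1) := by
        refine setIntegral_mono_set hΓ ?_ hsub.eventuallyLE
        filter_upwards [ae_restrict_mem measurableSet_Ioi] with u hu
        exact mul_nonneg (Real.exp_pos _).le (Real.rpow_nonneg (le_of_lt hu) _)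
    _ = Real.Gamma y := (Real.Gamma_eq_integral (zero_lt_one.trans_le hy)).symm

theorem integral_rpow_mul_sub_rpow {r s t : ℝ} (hr : 0 < r) (hs : 0 < s) (ht : 0 < t) :
    ∫ u in 0..t, u ^ (r - 1) * (t - u) ^ (s - 1) =
      t ^ (r + s - 1) * (Real.Gamma r * Real.Gamma s / Real.Gamma (r + s)) := by
  have hbeta := Complex.betaIntegral_scaled r s ht
  rw [Complex.betaIntegral_eq_Gamma_mul_div _ _ (by simpa) (by simpa)] at hbeta
  apply Complex.ofReal_injective
  rw [← intervalIntegral.integral_ofReal]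
  have hcast : ∫ u in 0..t, ((u ^ (r - 1) * (t - u) ^ (s - 1) : ℝ) : ℂ) =
      ∫ u in 0..t, (u : ℂ) ^ ((r : ℂ) - 1) * ((t : ℂ) - u) ^ ((s : ℂ) - 1) := by
    refine intervalIntegral.integral_congr fun u hu => ?_
    rw [uIcc_of_le ht.le] at hu
    simp [Complex.ofReal_cpow hu.1, Complex.ofReal_cpow (sub_nonneg.2 hu.2)]
  rw [hcast, hbeta]
  simp [Complex.ofReal_cpow ht.le, ← Complex.Gamma_ofReal]

theorem intervalIntegrable_rpow_mul_sub_rpow {r s t : ℝ} (hr : 0 < r) (hs : 0 < s) (ht : 0 < t) :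
    IntervalIntegrable (fun u => u ^ (r - 1) * (t - u) ^ (s - 1)) volume 0 t := by
  refine intervalIntegral.intervalIntegrable_of_integral_ne_zero ?_
  rw [integral_rpow_mul_sub_rpow hr hs ht]
  positivity

end Gamma

section MittagLeffler

variable {a b : ℝ}

theorem summable_mittagLeffler (ha : 0 < a) (b z : ℝ) :
    Summable fun m : ℕ => z ^ m / Real.Gamma (a * m + b) := by
  -- For this `R` the bound `R ^ (y - 1) * exp (-R) ≤ Γ(y)` gives geometric decay of ratio `1 / 2`.
  let R : ℝ := (2 * (|z| + 1)) ^ a⁻¹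
  have hRa : R ^ a = 2 * (|z| + 1) := Real.rpow_inv_rpow (by positivity) ha.ne'
  have hR0 : 0 < R := by positivity
  set C : ℝ := R ^ (b - 1) * Real.exp (-R) with hC
  have hC0 : 0 < C := by positivity
  have hlarge : ∀ᶠ m : ℕ in atTop, 1 ≤ a * m + b :=
    (tendsto_atTop_add_const_right _ b
      (tendsto_natCast_atTop_atTop.const_mul_atTop ha)).eventually_ge_atTop 1
  refine Summable.of_norm_bounded_eventually_nat (g := fun m => C⁻¹ * (1 / 2) ^ m)
    (summable_geometric_two.mul_left _) ?_
  filter_upwards [hlarge] with m hm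
  have hΓ : (2 * (|z| + 1)) ^ m * C ≤ Real.Gamma (a * m + b) := by
    refine le_of_eq_of_le ?_ (rpow_sub_one_mul_exp_neg_le_Gamma hR0.le hm)
    rw [hC, ← mul_assoc, add_sub_assoc, Real.rpow_add hR0, Real.rpow_mul hR0.le, hRa,
      Real.rpow_natCast]
  have hΓ0 : 0 < Real.Gamma (a * m + b) := Real.Gamma_pos_of_pos (by linarith)
  rw [norm_div, norm_pow, Real.norm_eq_abs, Real.norm_of_nonneg hΓ0.le, div_le_iff₀ hΓ0]
  calc |z| ^ m ≤ (|z| + 1) ^ m := by gcongr; linarith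
    _ = C⁻¹ * (1 / 2) ^ m * ((2 * (|z| + 1)) ^ m * C) := by
        rw [mul_pow, one_div, inv_pow]
        field_simp
    _ ≤ C⁻¹ * (1 / 2) ^ m * Real.Gamma (a * m + b) := by gcongr

theorem mittagLeffler_eq_inv_Gamma_add (ha : 0 < a) (b z : ℝ) :
    mittagLeffler a b z = (Real.Gamma b)⁻¹ + z * mittagLeffler a (a + b) z := by
  rw [mittagLeffler, (summable_mittagLeffler ha b z).tsum_eq_zero_add, mittagLeffler,
    ← tsum_mul_left]
  congr 1
  · simp
  · refine tsum_congr fun m => ?_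
    rw [pow_succ']
    push_cast
    ring_nf

theorem mittagLeffler_zero (ha : 0 < a) (b : ℝ) : mittagLeffler a b 0 = (Real.Gamma b)⁻¹ := by
  rw [mittagLeffler_eq_inv_Gamma_add ha, zero_mul, add_zero]

theorem continuous_mittagLeffler (ha : 0 < a) (b : ℝ) : Continuous (mittagLeffler a b) := by
  refine continuous_iff_continuousAt.2 fun z => ?_
  have hball : ContinuousOn (mittagLeffler a b) (Metric.ball 0 (|z| + 1)) := by
    refine continuousOn_tsum (fun m => by fun_prop) (summable_mittagLeffler ha b (|z| + 1)).norm
      fun m w hw => ?_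
    rw [mem_ball_zero_iff, Real.norm_eq_abs] at hw
    rw [norm_div, norm_div, norm_pow, norm_pow, Real.norm_eq_abs, Real.norm_eq_abs (|z| + 1)]
    exact div_le_div_of_nonneg_right
      (pow_le_pow_left₀ (abs_nonneg _) (hw.le.trans (le_abs_self _)) m) (norm_nonneg _)
  exact hball.continuousAt (Metric.isOpen_ball.mem_nhds (by simp))

theorem hasSum_rpow_mul_mittagLeffler (ha : 0 < a) (b c : ℝ) {t : ℝ} (ht : 0 < t) :
    HasSum (fun m : ℕ => c ^ m / Real.Gamma (a * m + b) * t ^ (a * m + b - 1))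
      (t ^ (b - 1) * mittagLeffler a b (c * t ^ a)) := by
  refine ((summable_mittagLeffler ha b (c * t ^ a)).hasSum.mul_left (t ^ (b - 1))).congr_fun ?_
  intro m
  rw [mul_pow, ← Real.rpow_natCast (t ^ a), ← Real.rpow_mul ht.le, add_sub_assoc,
    Real.rpow_add ht]
  ring

theorem integral_mittagLeffler_term_mul_sub_rpow (ha : 0 ≤ a) (hb : 0 < b) {r t : ℝ} (hr : 0 < r)
    (ht : 0 < t) (c : ℝ) (m : ℕ) :
    ∫ u in 0..t, c ^ m / Real.Gamma (a * m + b) * u ^ (a * m + b - 1) * (t - u) ^ (r - 1) =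
      Real.Gamma r * (c ^ m / Real.Gamma (a * m + (b + r)) * t ^ (a * m + (b + r) - 1)) := by
  simp_rw [mul_assoc]
  rw [intervalIntegral.integral_const_mul, integral_rpow_mul_sub_rpow (by positivity) hr ht,
    add_assoc]
  field_simp

/-- Up to the factor `Γ(r)`, the left-hand side is a Riemann–Liouville fractional integral of
order `r`. -/
theorem integral_rpow_mul_mittagLeffler_mul_sub_rpow (ha : 0 < a) (hb : 0 < b) {r t : ℝ}
    (hr : 0 < r) (ht : 0 < t) (c : ℝ) :
    ∫ u in 0..t, u ^ (b - 1) * mittagLeffler a b (c * u ^ a) * (t - u) ^ (r - 1) =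
      Real.Gamma r * (t ^ (b + r - 1) * mittagLeffler a (b + r) (c * t ^ a)) := by
  let F (c : ℝ) (m : ℕ) (u : ℝ) : ℝ :=
    c ^ m / Real.Gamma (a * m + b) * u ^ (a * m + b - 1) * (t - u) ^ (r - 1)
  have hpos (m : ℕ) : 0 < a * m + b := by positivity
  have hint (m : ℕ) : IntegrableOn (F c m) (Ioc 0 t) := by
    rw [← intervalIntegrable_iff_integrableOn_Ioc_of_le ht.le]
    simpa only [F, mul_assoc] using
      (intervalIntegrable_rpow_mul_sub_rpow (hpos m) hr ht).const_mul _
  have hval (c : ℝ) (m : ℕ) : ∫ u in Ioc 0 t, F c m u =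
      Real.Gamma r * (c ^ m / Real.Gamma (a * m + (b + r)) * t ^ (a * m + (b + r) - 1)) := by
    rw [← intervalIntegral.integral_of_le ht.le,
      integral_mittagLeffler_term_mul_sub_rpow ha.le hb hr ht]
  have hsum (c : ℝ) : HasSum (fun m => ∫ u in Ioc 0 t, F c m u)
      (Real.Gamma r * (t ^ (b + r - 1) * mittagLeffler a (b + r) (c * t ^ a))) := by
    simp_rw [hval]
    exact (hasSum_rpow_mul_mittagLeffler ha (b + r) c ht).mul_left _
  have hnorm (m : ℕ) : ∫ u in Ioc 0 t, ‖F c m u‖ = ∫ u in Ioc 0 t, F |c| m u := by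
    refine setIntegral_congr_fun measurableSet_Ioc fun u hu => ?_
    have hΓ := Real.Gamma_pos_of_pos (hpos m)
    simp only [F, norm_mul, norm_div, norm_pow, Real.norm_eq_abs, abs_of_pos hΓ,
      Real.abs_rpow_of_nonneg hu.1.le, Real.abs_rpow_of_nonneg (sub_nonneg.2 hu.2),
      abs_of_pos hu.1, abs_of_nonneg (sub_nonneg.2 hu.2)]
  have hterm : ∀ u ∈ Ioc 0 t, ∑' m, F c m u =
      u ^ (b - 1) * mittagLeffler a b (c * u ^ a) * (t - u) ^ (r - 1) := fun u hu =>
    ((hasSum_rpow_mul_mittagLeffler ha b c hu.1).mul_right _).tsum_eq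
  rw [intervalIntegral.integral_of_le ht.le, ← setIntegral_congr_fun measurableSet_Ioc hterm]
  refine (hasSum_integral_of_summable_integral_norm hint ?_).unique (hsum c)
  simp_rw [hnorm]
  exact (hsum |c|).summable

end MittagLeffler

section LaplaceTransform

variable {f g : ℝ → ℝ} {s : ℝ}

/-- The Laplace transform `∫_0^∞ e^{-ts} f(t) dt` at a real point `s`; it is `0` where the integral
does not converge absolutely. It turns the resolvent equation into an algebraic one. -/
noncomputable def laplaceTransform (f : ℝ → ℝ) (s : ℝ) : ℝ :=
  ∫ t in Ioi 0, Real.exp (-(t * s)) * f t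

theorem laplaceTransform_convolution
    (hf : IntegrableOn (fun t => Real.exp (-(t * s)) * f t) (Ioi 0))
    (hg : IntegrableOn (fun t => Real.exp (-(t * s)) * g t) (Ioi 0)) :
    laplaceTransform (fun t => ∫ u in 0..t, f u * g (t - u)) s =
      laplaceTransform f s * laplaceTransform g s := by
  have h := integral_posConvolution hf hg (ContinuousLinearMap.mul ℝ ℝ)
  simp only [ContinuousLinearMap.mul_apply'] at h
  rw [laplaceTransform, laplaceTransform, laplaceTransform, ← h]
  congr 1 with t
  rw [← intervalIntegral.integral_const_mul]
  congr 1 with u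
  have hexp : Real.exp (-(t * s)) = Real.exp (-(u * s)) * Real.exp (-((t - u) * s)) := by
    rw [← Real.exp_add]
    ring_nf
  rw [hexp]
  ring

theorem tendsto_laplaceTransform_zero (hf : IntegrableOn f (Ioi 0)) :
    Tendsto (laplaceTransform f) (𝓝[>] 0) (𝓝 (∫ t in Ioi 0, f t)) := by
  refine tendsto_integral_filter_of_dominated_convergence (fun t => ‖f t‖)
    (.of_forall fun s => (Continuous.aestronglyMeasurable (by fun_prop)).mul hf.1) ?_ hf.norm
    (ae_of_all _ fun t => ?_)
  · filter_upwards [self_mem_nhdsWithin] with s hs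
    filter_upwards [ae_restrict_mem measurableSet_Ioi] with t ht
    rw [norm_mul, Real.norm_of_nonneg (Real.exp_pos _).le]
    exact mul_le_of_le_one_left (norm_nonneg _)
      (Real.exp_le_one_iff.2 (neg_nonpos.2 (mul_pos ht hs).le))
  · have hcont : Continuous fun s => Real.exp (-(t * s)) * f t := by fun_prop
    exact (hcont.tendsto' 0 (f t) (by simp)).mono_left nhdsWithin_le_nhds

theorem integrableOn_Ioi_of_laplaceTransform_le {C : ℝ} (hf : ∀ t, 0 < t → 0 ≤ f t)
    (hint : ∀ s, 0 < s → IntegrableOn (fun t => Real.exp (-(t * s)) * f t) (Ioi 0))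
    (hC : ∀ s, 0 < s → laplaceTransform f s ≤ C) : IntegrableOn f (Ioi 0) := by
  have hpos (n : ℕ) : 0 < 1 / ((n : ℝ) + 1) := Nat.one_div_pos_of_nat
  have hlim (t : ℝ) : Tendsto (fun n : ℕ => Real.exp (-(t * (1 / ((n : ℝ) + 1)))) * f t) atTop
      (𝓝 (f t)) := by
    have hcont : Continuous fun s => Real.exp (-(t * s)) * f t := by fun_prop
    exact (hcont.tendsto' 0 (f t) (by simp)).comp tendsto_one_div_add_atTop_nhds_zero_nat
  have hbound (n : ℕ) :
      ∫⁻ t in Ioi 0, ‖Real.exp (-(t * (1 / ((n : ℝ) + 1)))) * f t‖ₑ ≤ ENNReal.ofReal C := by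
    rw [← ofReal_integral_norm_eq_lintegral_enorm (hint _ (hpos n))]
    refine ENNReal.ofReal_le_ofReal (le_of_eq_of_le ?_ (hC _ (hpos n)))
    exact setIntegral_congr_fun measurableSet_Ioi fun t ht =>
      Real.norm_of_nonneg (mul_nonneg (Real.exp_pos _).le (hf t ht))
  refine integrable_of_tendsto (ae_of_all _ hlim) (fun n => (hint _ (hpos n)).1) ?_
  exact ne_top_of_le_ne_top ENNReal.ofReal_ne_top
    (liminf_le_of_frequently_le' (.of_forall hbound))

end LaplaceTransform

section VolterraResolvent

variable {κ f : ℝ → ℝ} {s t T : ℝ}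

/-- `f` is the resolvent of the Volterra kernel `κ` on `(0, ∞)`: the convolution
`(f * κ)(t) = ∫_0^t f(u) κ(t - u) du` converges and `f + f * κ = κ`. -/
structure IsVolterraResolvent (κ f : ℝ → ℝ) : Prop where
  intervalIntegrable (t : ℝ) (ht : 0 < t) :
    IntervalIntegrable (fun u => f u * κ (t - u)) volume 0 t
  add_integral_eq (t : ℝ) (ht : 0 < t) : f t + ∫ u in 0..t, f u * κ (t - u) = κ t

/-- A positive, continuous, locally integrable and log-convex convolution kernel on `(0, ∞)`.
Log-convexity is encoded as monotonicity of the ratios `κ(t + h) / κ(t)` in `t`. -/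
structure IsLogConvexKernel (κ : ℝ → ℝ) : Prop where
  pos (t : ℝ) (ht : 0 < t) : 0 < κ t
  continuousOn : ContinuousOn κ (Ioi 0)
  intervalIntegrable (t : ℝ) (ht : 0 < t) : IntervalIntegrable κ volume 0 t
  monotoneOn_div (h : ℝ) (hh : 0 < h) : MonotoneOn (fun t => κ (t + h) / κ t) (Ioi 0)

theorem IsLogConvexKernel.eventually_integral_lt_div (hκ : IsLogConvexKernel κ) (hT : 0 < T) :
    ∀ᶠ t in 𝓝[<] T, ∫ u in 0..T - t, κ u < κ T / κ t := by
  have hratio : Tendsto (fun t => κ T / κ t) (𝓝[<] T) (𝓝 1) := by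
    have hcont := (hκ.continuousOn.continuousAt (Ioi_mem_nhds hT)).tendsto
    rw [← div_self (hκ.pos T hT).ne']
    exact (tendsto_const_nhds.div hcont (hκ.pos T hT).ne').mono_left nhdsWithin_le_nhds
  have hprimitive : Tendsto (fun t => ∫ u in 0..T - t, κ u) (𝓝[<] T) (𝓝 0) := by
    have hcont := intervalIntegral.continuousOn_primitive_interval'
      (hκ.intervalIntegrable T hT) left_mem_uIcc 0 left_mem_uIcc
    rw [ContinuousWithinAt, intervalIntegral.integral_same] at hcont
    refine hcont.comp (tendsto_nhdsWithin_iff.2 ⟨?_, ?_⟩)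
    · exact ((continuous_const.sub continuous_id).tendsto' T 0 (sub_self T)).mono_left
        nhdsWithin_le_nhds
    · filter_upwards [Ioo_mem_nhdsLT hT] with t ht
      rw [uIcc_of_le hT.le]
      exact ⟨by linarith [ht.2], by linarith [ht.1]⟩
  exact hprimitive.eventually_lt hratio zero_lt_one

theorem forall_pos_of_forall_Ioo_pos (hf : ContinuousOn f (Ioi 0))
    (hzero : ∀ᶠ t in 𝓝[>] 0, 0 < f t)
    (hstep : ∀ T, 0 < T → (∀ t ∈ Ioo 0 T, 0 < f t) → 0 < f T) (ht : 0 < t) : 0 < f t := by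
  by_contra! hft
  obtain ⟨ε, hε, hεpos⟩ := mem_nhdsGT_iff_exists_Ioo_subset.1 hzero
  have hεt : ε ≤ t := not_lt.1 fun h => (hεpos ⟨ht, h⟩ : 0 < f t).not_ge hft
  have hcont : ContinuousOn f (Icc ε t) := hf.mono fun u hu => lt_of_lt_of_le hε hu.1
  have hcompact : IsCompact (Icc ε t ∩ f ⁻¹' Iic 0) :=
    isCompact_Icc.of_isClosed_subset (hcont.preimage_isClosed_of_isClosed isClosed_Icc isClosed_Iic)
      inter_subset_left
  obtain ⟨T, ⟨hT, hfT⟩, hleast⟩ := hcompact.exists_isLeast ⟨t, ⟨hεt, le_rfl⟩, hft⟩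
  refine (hstep T (lt_of_lt_of_le hε hT.1) fun u hu => ?_).not_ge hfT
  rcases lt_or_ge u ε with huε | huε
  · exact hεpos ⟨hu.1, huε⟩
  · by_contra! hfu
    exact hu.2.not_ge (hleast ⟨⟨huε, hu.2.le.trans hT.2⟩, hfu⟩)

namespace IsVolterraResolvent

theorem intervalIntegrable_left (hf : IsVolterraResolvent κ f) (ht : 0 < t) (htT : t ≤ T) :
    IntervalIntegrable (fun u => f u * κ (T - u)) volume 0 t :=
  (hf.intervalIntegrable T (ht.trans_le htT)).mono_set <| by
    rw [uIcc_of_le ht.le, uIcc_of_le (ht.le.trans htT)]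
    exact Icc_subset_Icc_right htT

theorem intervalIntegrable_right (hf : IsVolterraResolvent κ f) (ht : 0 < t) (htT : t ≤ T) :
    IntervalIntegrable (fun u => f u * κ (T - u)) volume t T :=
  (hf.intervalIntegrable T (ht.trans_le htT)).mono_set <| by
    rw [uIcc_of_le htT, uIcc_of_le (ht.le.trans htT)]
    exact Icc_subset_Icc_left ht.le

theorem integral_le_of_nonneg (hf : IsVolterraResolvent κ f) (hκ : IsLogConvexKernel κ)
    (ht : 0 < t) (htT : t < T) (hpos : ∀ u ∈ Ioo 0 t, 0 ≤ f u) :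
    ∫ u in 0..t, f u * κ (T - u) ≤ κ T - κ T / κ t * f t := by
  have hκt := hκ.pos t ht
  have hshift : ∀ u ∈ Ioo 0 t, f u * κ (T - u) ≤ κ T / κ t * (f u * κ (t - u)) := by
    intro u hu
    have htu : 0 < t - u := sub_pos.2 hu.2
    have hratio : κ (T - u) / κ (t - u) ≤ κ T / κ t := by
      have hmono := hκ.monotoneOn_div (T - t) (sub_pos.2 htT) htu ht (sub_le_self t hu.1.le)
      simpa only [sub_add_sub_cancel', add_sub_cancel] using hmono
    calc f u * κ (T - u) ≤ f u * (κ T / κ t * κ (t - u)) :=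
          mul_le_mul_of_nonneg_left ((div_le_iff₀ (hκ.pos _ htu)).1 hratio) (hpos u hu)
      _ = κ T / κ t * (f u * κ (t - u)) := mul_left_comm _ _ _
  calc ∫ u in 0..t, f u * κ (T - u)
      ≤ ∫ u in 0..t, κ T / κ t * (f u * κ (t - u)) :=
        intervalIntegral.integral_mono_on_of_le_Ioo ht.le (hf.intervalIntegrable_left ht htT.le)
          ((hf.intervalIntegrable t ht).const_mul _) hshift
    _ = κ T / κ t * (κ t - f t) := by
        rw [intervalIntegral.integral_const_mul, ← hf.add_integral_eq t ht, add_sub_cancel_left]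
    _ = κ T - κ T / κ t * f t := by field_simp

theorem mul_sub_le_of_forall_le (hf : IsVolterraResolvent κ f) (hκ : IsLogConvexKernel κ)
    (ht : 0 < t) (htT : t < T) (hpos : ∀ u ∈ Ioo 0 t, 0 ≤ f u) (hmax : ∀ u ∈ Icc t T, f u ≤ f t) :
    f t * (κ T / κ t - ∫ u in 0..T - t, κ u) ≤ f T := by
  have hκint : IntervalIntegrable (fun u => κ (T - u)) volume t T := by
    simpa using ((hκ.intervalIntegrable (T - t) (sub_pos.2 htT)).comp_sub_left T).symm
  have hright : ∫ u in t..T, f u * κ (T - u) ≤ f t * ∫ u in 0..T - t, κ u :=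
    calc ∫ u in t..T, f u * κ (T - u)
        ≤ ∫ u in t..T, f t * κ (T - u) :=
          intervalIntegral.integral_mono_on_of_le_Ioo htT.le
            (hf.intervalIntegrable_right ht htT.le) (hκint.const_mul _) fun u hu =>
            mul_le_mul_of_nonneg_right (hmax u ⟨hu.1.le, hu.2.le⟩) (hκ.pos _ (sub_pos.2 hu.2)).le
      _ = f t * ∫ u in 0..T - t, κ u := by
          rw [intervalIntegral.integral_const_mul, intervalIntegral.integral_comp_sub_left,
            sub_self]
  have hleft := hf.integral_le_of_nonneg hκ ht htT hpos
  have hT := hf.add_integral_eq T (ht.trans htT)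
  rw [← intervalIntegral.integral_add_adjacent_intervals (hf.intervalIntegrable_left ht htT.le)
    (hf.intervalIntegrable_right ht htT.le)] at hT
  linarith

theorem pos_of_forall_Ioo_pos (hf : IsVolterraResolvent κ f) (hκ : IsLogConvexKernel κ)
    (hcont : ContinuousOn f (Ioi 0)) (hT : 0 < T) (hpos : ∀ t ∈ Ioo 0 T, 0 < f t) : 0 < f T := by
  obtain ⟨a, haT, ha⟩ := mem_nhdsLT_iff_exists_Ico_subset.1
    (inter_mem (hκ.eventually_integral_lt_div hT) (Ioo_mem_nhdsLT hT))
  have ha0 : 0 < a := (ha ⟨le_rfl, haT⟩).2.1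
  obtain ⟨t, ht, hmax⟩ := isCompact_Icc.exists_isMaxOn (nonempty_Icc.2 (le_of_lt haT))
    (hcont.mono fun u hu => ha0.trans_le hu.1)
  have hft : 0 < f t := (hpos a ⟨ha0, haT⟩).trans_le (hmax ⟨le_rfl, le_of_lt haT⟩)
  rcases ht.2.eq_or_lt with rfl | htT
  · exact hft
  · have hlt : ∫ u in 0..T - t, κ u < κ T / κ t := (ha ⟨ht.1, htT⟩).1
    refine (mul_pos hft (sub_pos.2 hlt)).trans_le ?_
    exact hf.mul_sub_le_of_forall_le hκ (ha0.trans_le ht.1) htT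
      (fun u hu => (hpos u ⟨hu.1, hu.2.trans htT⟩).le) fun u hu => hmax ⟨ht.1.trans hu.1, hu.2⟩

theorem pos (hf : IsVolterraResolvent κ f) (hκ : IsLogConvexKernel κ)
    (hcont : ContinuousOn f (Ioi 0)) (hzero : ∀ᶠ t in 𝓝[>] 0, 0 < f t) (ht : 0 < t) : 0 < f t :=
  forall_pos_of_forall_Ioo_pos hcont hzero (fun _ => hf.pos_of_forall_Ioo_pos hκ hcont) ht

theorem le_kernel (hf : IsVolterraResolvent κ f) (hκ : ∀ t, 0 < t → 0 ≤ κ t)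
    (hnonneg : ∀ t, 0 < t → 0 ≤ f t) (ht : 0 < t) : f t ≤ κ t := by
  have hint : 0 ≤ ∫ u in 0..t, f u * κ (t - u) := by
    rw [intervalIntegral.integral_of_le ht.le, integral_Ioc_eq_integral_Ioo]
    exact setIntegral_nonneg measurableSet_Ioo fun u hu =>
      mul_nonneg (hnonneg u hu.1) (hκ _ (sub_pos.2 hu.2))
  linarith [hf.add_integral_eq t ht]

theorem laplaceTransform_eq (hf : IsVolterraResolvent κ f)
    (hfint : IntegrableOn (fun t => Real.exp (-(t * s)) * f t) (Ioi 0))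
    (hκint : IntegrableOn (fun t => Real.exp (-(t * s)) * κ t) (Ioi 0)) :
    laplaceTransform f s = laplaceTransform κ s / (1 + laplaceTransform κ s) := by
  have hconv : laplaceTransform f s * laplaceTransform κ s =
      laplaceTransform κ s - laplaceTransform f s := by
    rw [← laplaceTransform_convolution hfint hκint, laplaceTransform, laplaceTransform,
      laplaceTransform, ← integral_sub hκint hfint]
    refine setIntegral_congr_fun measurableSet_Ioi fun t ht => ?_
    simp only [← hf.add_integral_eq t ht]
    ring
  have hne : 1 + laplaceTransform κ s ≠ 0 := fun h => by
    rw [eq_neg_of_add_eq_zero_right h] at hconv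
    linarith
  rw [eq_div_iff hne]
  linarith

end IsVolterraResolvent

end VolterraResolvent

section RiemannLiouvilleKernel

variable {α c : ℝ}

/-- The convolution kernel of `c` times the Riemann–Liouville fractional integral of order `α`. -/
noncomputable def riemannLiouvilleKernel (α c t : ℝ) : ℝ :=
  c / Real.Gamma α * t ^ (α - 1)

theorem isLogConvexKernel_riemannLiouvilleKernel (hα : α ∈ Ioc (0 : ℝ) 1) (hc : 0 < c) :
    IsLogConvexKernel (riemannLiouvilleKernel α c) where
  pos t ht := by
    have := hα.1
    unfold riemannLiouvilleKernel
    positivity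
  continuousOn := continuousOn_const.mul
    (continuousOn_id.rpow_const fun _ ht => Or.inl (ne_of_gt ht))
  intervalIntegrable t _ :=
    (intervalIntegral.intervalIntegrable_rpow' (by linarith [hα.1])).const_mul _
  monotoneOn_div h hh x hx y hy hxy := by
    have hx : 0 < x := hx
    have hy : 0 < y := hy
    have hΓ := Real.Gamma_pos_of_pos hα.1
    have hratio (t : ℝ) (ht : 0 < t) : riemannLiouvilleKernel α c (t + h) /
        riemannLiouvilleKernel α c t = (1 + h / t) ^ (α - 1) := by
      rw [riemannLiouvilleKernel, riemannLiouvilleKernel, mul_div_mul_left _ _ (by positivity),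
        ← Real.div_rpow (by positivity) ht.le, add_div, div_self ht.ne']
    simp only [hratio x hx, hratio y hy]
    exact Real.rpow_le_rpow_of_nonpos (by positivity) (by gcongr) (by linarith [hα.2])

theorem integrableOn_exp_mul_riemannLiouvilleKernel (hα : 0 < α) (c : ℝ) {s : ℝ} (hs : 0 < s) :
    IntegrableOn (fun t => Real.exp (-(t * s)) * riemannLiouvilleKernel α c t) (Ioi 0) := by
  have h := (integrableOn_rpow_mul_exp_neg_mul_rpow (p := 1) (s := α - 1) (b := s)
    (by linarith) one_pos hs).const_mul (c / Real.Gamma α)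
  refine IntegrableOn.congr_fun h (fun t _ => ?_) measurableSet_Ioi
  simp only [riemannLiouvilleKernel, Real.rpow_one]
  ring_nf

theorem laplaceTransform_riemannLiouvilleKernel (hα : 0 < α) (c : ℝ) {s : ℝ} (hs : 0 < s) :
    laplaceTransform (riemannLiouvilleKernel α c) s = c / s ^ α := by
  calc laplaceTransform (riemannLiouvilleKernel α c) s
      = ∫ t in Ioi 0, c / Real.Gamma α * (t ^ (α - 1) * Real.exp (-(s * t))) := by
        simp only [laplaceTransform, riemannLiouvilleKernel, mul_comm s]
        congr 1 with t
        ring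
    _ = c / s ^ α := by
        rw [integral_const_mul, Real.integral_rpow_mul_exp_neg_mul_Ioi hα hs, one_div,
          Real.inv_rpow hs.le]
        field_simp

end RiemannLiouvilleKernel

section MittagLefflerDensity

variable {α lam s t : ℝ}

/-- The Mittag-Leffler density with parameters `α` and `lam`, the Lévy density of the theorem; it
is meant for `0 < τ`. -/
noncomputable def mittagLefflerDensity (α lam τ : ℝ) : ℝ :=
  lam * τ ^ (α - 1) * mittagLeffler α α (-(lam * τ ^ α))

theorem continuous_mittagLeffler_neg_mul_rpow (hα : 0 < α) (b lam : ℝ) :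
    Continuous fun t : ℝ => mittagLeffler α b (-(lam * t ^ α)) :=
  (continuous_mittagLeffler hα b).comp
    (continuous_const.mul (Real.continuous_rpow_const hα.le)).neg

theorem continuousOn_mittagLefflerDensity (hα : 0 < α) (lam : ℝ) :
    ContinuousOn (mittagLefflerDensity α lam) (Ioi 0) :=
  (continuousOn_const.mul (continuousOn_id.rpow_const fun _ ht => Or.inl (ne_of_gt ht))).mul
    (continuous_mittagLeffler_neg_mul_rpow hα α lam).continuousOn

theorem isVolterraResolvent_mittagLefflerDensity (hα : 0 < α) (lam : ℝ) :
    IsVolterraResolvent (riemannLiouvilleKernel α lam) (mittagLefflerDensity α lam) where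
  intervalIntegrable t ht := by
    have h := ((intervalIntegrable_rpow_mul_sub_rpow hα hα ht).const_mul
      (lam * (lam / Real.Gamma α))).mul_continuousOn
      (continuous_mittagLeffler_neg_mul_rpow hα α lam).continuousOn
    refine h.congr fun u _ => ?_
    simp only [mittagLefflerDensity, riemannLiouvilleKernel]
    ring
  add_integral_eq t ht := by
    have hconv : ∫ u in 0..t, mittagLefflerDensity α lam u * riemannLiouvilleKernel α lam (t - u) =
        lam ^ 2 * (t ^ (α + α - 1) * mittagLeffler α (α + α) (-(lam * t ^ α))) := by
      have h := integral_rpow_mul_mittagLeffler_mul_sub_rpow hα hα hα ht (-lam)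
      simp only [neg_mul] at h
      calc _ = ∫ u in 0..t, lam ^ 2 / Real.Gamma α *
              (u ^ (α - 1) * mittagLeffler α α (-(lam * u ^ α)) * (t - u) ^ (α - 1)) := by
            congr 1 with u
            rw [mittagLefflerDensity, riemannLiouvilleKernel]
            ring
        _ = _ := by
            rw [intervalIntegral.integral_const_mul, h]
            field_simp
    rw [hconv, mittagLefflerDensity, mittagLeffler_eq_inv_Gamma_add hα, riemannLiouvilleKernel,
      add_sub_assoc, Real.rpow_add ht]
    ring

theorem eventually_mittagLefflerDensity_pos (hα : 0 < α) (hlam : 0 < lam) :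
    ∀ᶠ t in 𝓝[>] 0, 0 < mittagLefflerDensity α lam t := by
  have hzero : 0 < mittagLeffler α α (-(lam * 0 ^ α)) := by
    rw [Real.zero_rpow hα.ne', mul_zero, neg_zero, mittagLeffler_zero hα]
    positivity
  have hnear := ((continuous_mittagLeffler_neg_mul_rpow hα α lam).tendsto 0).eventually_const_lt
    hzero
  filter_upwards [nhdsWithin_le_nhds hnear, self_mem_nhdsWithin] with t hE ht
  exact mul_pos (mul_pos hlam (Real.rpow_pos_of_pos ht _)) hE

theorem mittagLefflerDensity_pos (hα : α ∈ Ioc (0 : ℝ) 1) (hlam : 0 < lam) (ht : 0 < t) :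
    0 < mittagLefflerDensity α lam t :=
  (isVolterraResolvent_mittagLefflerDensity hα.1 lam).pos
    (isLogConvexKernel_riemannLiouvilleKernel hα hlam)
    (continuousOn_mittagLefflerDensity hα.1 lam) (eventually_mittagLefflerDensity_pos hα.1 hlam) ht

theorem mittagLefflerDensity_le_riemannLiouvilleKernel (hα : α ∈ Ioc (0 : ℝ) 1) (hlam : 0 < lam)
    (ht : 0 < t) : mittagLefflerDensity α lam t ≤ riemannLiouvilleKernel α lam t :=
  (isVolterraResolvent_mittagLefflerDensity hα.1 lam).le_kernel
    (fun u hu => ((isLogConvexKernel_riemannLiouvilleKernel hα hlam).pos u hu).le)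
    (fun _ hu => (mittagLefflerDensity_pos hα hlam hu).le) ht

theorem integrableOn_exp_mul_mittagLefflerDensity (hα : α ∈ Ioc (0 : ℝ) 1) (hlam : 0 < lam)
    (hs : 0 < s) :
    IntegrableOn (fun t => Real.exp (-(t * s)) * mittagLefflerDensity α lam t) (Ioi 0) := by
  refine (integrableOn_exp_mul_riemannLiouvilleKernel hα.1 lam hs).mono' ?_ ?_
  · exact ((Continuous.continuousOn (by fun_prop)).mul
      (continuousOn_mittagLefflerDensity hα.1 lam)).aestronglyMeasurable measurableSet_Ioi
  · filter_upwards [ae_restrict_mem measurableSet_Ioi] with t ht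
    rw [Real.norm_of_nonneg
      (mul_nonneg (Real.exp_pos _).le (mittagLefflerDensity_pos hα hlam ht).le)]
    gcongr
    exact mittagLefflerDensity_le_riemannLiouvilleKernel hα hlam ht

theorem laplaceTransform_mittagLefflerDensity (hα : α ∈ Ioc (0 : ℝ) 1) (hlam : 0 < lam)
    (hs : 0 < s) : laplaceTransform (mittagLefflerDensity α lam) s = lam / (lam + s ^ α) := by
  rw [(isVolterraResolvent_mittagLefflerDensity hα.1 lam).laplaceTransform_eq
    (integrableOn_exp_mul_mittagLefflerDensity hα hlam hs)
    (integrableOn_exp_mul_riemannLiouvilleKernel hα.1 lam hs),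
    laplaceTransform_riemannLiouvilleKernel hα.1 lam hs]
  field_simp
  ring

theorem integrableOn_mittagLefflerDensity (hα : α ∈ Ioc (0 : ℝ) 1) (hlam : 0 < lam) :
    IntegrableOn (mittagLefflerDensity α lam) (Ioi 0) := by
  refine integrableOn_Ioi_of_laplaceTransform_le (C := 1)
    (fun t ht => (mittagLefflerDensity_pos hα hlam ht).le)
    (fun s hs => integrableOn_exp_mul_mittagLefflerDensity hα hlam hs) fun s hs => ?_
  rw [laplaceTransform_mittagLefflerDensity hα hlam hs]
  exact div_le_one_of_le₀ (le_add_of_nonneg_right (by positivity)) (by positivity)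

theorem integral_mittagLefflerDensity (hα : α ∈ Ioc (0 : ℝ) 1) (hlam : 0 < lam) :
    ∫ t in Ioi 0, mittagLefflerDensity α lam t = 1 := by
  refine tendsto_nhds_unique
    (tendsto_laplaceTransform_zero (integrableOn_mittagLefflerDensity hα hlam)) ?_
  have hpow : Tendsto (fun s : ℝ => s ^ α) (𝓝[>] 0) (𝓝 0) :=
    ((Real.continuous_rpow_const hα.1.le).tendsto' 0 0 (Real.zero_rpow hα.1.ne')).mono_left
      nhdsWithin_le_nhds
  have hlim : Tendsto (fun s : ℝ => lam / (lam + s ^ α)) (𝓝[>] 0) (𝓝 1) := by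
    have h := (tendsto_const_nhds (x := lam)).div (hpow.const_add lam) (by simpa using hlam.ne')
    rwa [add_zero, div_self hlam.ne'] at h
  refine hlim.congr' ?_
  filter_upwards [self_mem_nhdsWithin] with s hs
  exact (laplaceTransform_mittagLefflerDensity hα hlam hs).symm

end MittagLefflerDensity

/-- For `α ∈ (0,1]`, `λ > 0`, `μ ≥ 0`, the Lévy–Khintchine integral with the
Mittag-Leffler density as Lévy density:
`∫_0^∞ (1 − e^{−τμ}) λ τ^{α−1} E_{α,α}(−λ τ^α) dτ = μ^α/(λ + μ^α)`. -/
theorem mittagLeffler_levy_khintchine (α lam μ : ℝ)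
    (hα : α ∈ Set.Ioc (0 : ℝ) 1) (hlam : 0 < lam) (hμ : 0 ≤ μ) :
    (∫ τ in Set.Ioi (0 : ℝ),
        (1 - Real.exp (-(τ * μ))) * (lam * τ ^ (α - 1) * mittagLeffler α α (-(lam * τ ^ α))))
      = μ ^ α / (lam + μ ^ α) := by
  rcases hμ.eq_or_lt with rfl | hμ
  · simp [Real.zero_rpow hα.1.ne']
  calc _ = ∫ τ in Ioi 0, (mittagLefflerDensity α lam τ -
          Real.exp (-(τ * μ)) * mittagLefflerDensity α lam τ) := by
        simp only [mittagLefflerDensity, sub_mul, one_mul]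
    _ = 1 - laplaceTransform (mittagLefflerDensity α lam) μ := by
        rw [integral_sub (integrableOn_mittagLefflerDensity hα hlam)
          (integrableOn_exp_mul_mittagLefflerDensity hα hlam hμ),
          integral_mittagLefflerDensity hα hlam, laplaceTransform]
    _ = μ ^ α / (lam + μ ^ α) := by
        rw [laplaceTransform_mittagLefflerDensity hα hlam hμ]
        field_simp
        ring
end

section
/- Let α, β ∈ (0,1], ξ > 0, t ≥ 0 and n ≥ 0 an integer. Then the series Σ_{m=0}^∞ (−ξ t^β)^m / Γ(βm + 1) · ∏_{j=0}^{n−1} (αm − j) converges absolutely, and the n-th Taylor coefficient at u = 0 of the function u ↦ E_β(−ξ t^β (1−u)^α) equals ((−1)^n/n!) Σ_{m=0}^∞ (−ξ t^β)^m / Γ(βm + 1) · ∏_{j=0}^{n−1} (αm − j); these are the state probabilities of the space-time fractional Poisson process. -/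
/-- Mittag-Leffler function `E_β(z) = Σ_{m=0}^∞ z^m / Γ(β m + 1)`. -/
noncomputable def mittagLefflerOne (β z : ℝ) : ℝ :=
  ∑' m : ℕ, z ^ m / Real.Gamma (β * m + 1)

/-!
The binomial series expands each power as `(1 + x) ^ (α * m) = ∑ₙ choose (α * m) n * x ^ n`, and the
Taylor coefficients of `E_β(z * (1 + x) ^ α) = ∑ₘ z ^ m / Γ(β * m + 1) * (1 + x) ^ (α * m)` are read
off after exchanging the two sums. The exchange is absolutely convergent: `|choose s n|` is at most
the `n`-th coefficient of `(1 - x) ^ (-|s|)`, so the absolute values at `|x| = r` sum to at most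
`∑ₘ (|z| * (1 - r) ^ (-|α|)) ^ m / Γ(β * m + 1)`, which is finite because `Γ` outgrows every
exponential. The substitution `x = -u` produces the sign `(-1) ^ n`.
-/

open Set MeasureTheory Filter Topology

theorem rpow_mul_exp_neg_le_Gamma {R x : ℝ} (hR : 0 ≤ R) (hx : 0 ≤ x) :
    R ^ x * Real.exp (-R) ≤ Real.Gamma (x + 1) := by
  have integrable : IntegrableOn (fun y : ℝ ↦ Real.exp (-y) * y ^ x) (Ioi 0) := by
    simpa only [add_sub_cancel_right] using Real.GammaIntegral_convergent (by linarith : 0 < x + 1)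
  have subset : Ioi R ⊆ Ioi 0 := Ioi_subset_Ioi hR
  calc R ^ x * Real.exp (-R) = ∫ y in Ioi R, Real.exp (-y) * R ^ x := by
        rw [integral_mul_const, integral_exp_neg_Ioi, mul_comm]
    _ ≤ ∫ y in Ioi R, Real.exp (-y) * y ^ x := by
        refine setIntegral_mono_on ((integrableOn_exp_neg_Ioi R).mul_const _)
          (integrable.mono_set subset) measurableSet_Ioi fun y hy ↦ ?_
        have hRy : R ≤ y := (mem_Ioi.mp hy).le
        gcongr
    _ ≤ ∫ y in Ioi 0, Real.exp (-y) * y ^ x := by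
        refine setIntegral_mono_set integrable ?_ subset.eventuallyLE
        filter_upwards [self_mem_ae_restrict measurableSet_Ioi] with y hy
        exact mul_nonneg (Real.exp_pos _).le (Real.rpow_nonneg (mem_Ioi.mp hy).le _)
    _ = Real.Gamma (x + 1) := by
        rw [Real.Gamma_eq_integral (by linarith), add_sub_cancel_right]

theorem summable_pow_div_Gamma {β : ℝ} (hβ : 0 < β) (z : ℝ) :
    Summable fun m : ℕ ↦ z ^ m / Real.Gamma (β * m + 1) := by
  set R : ℝ := (2 * |z|) ^ β⁻¹ with hR
  have R_nonneg : 0 ≤ R := by positivity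
  refine .of_norm_bounded (summable_geometric_two.mul_left (Real.exp R)) fun m ↦ ?_
  have Gamma_pos : 0 < Real.Gamma (β * m + 1) := Real.Gamma_pos_of_pos (by positivity)
  have R_rpow : R ^ (β * m) = (2 * |z|) ^ m := by
    rw [hR, ← Real.rpow_mul (by positivity), inv_mul_cancel_left₀ hβ.ne', Real.rpow_natCast]
  rw [norm_div, norm_pow, Real.norm_eq_abs, Real.norm_of_nonneg Gamma_pos.le, div_le_iff₀ Gamma_pos]
  calc |z| ^ m = Real.exp R * (1 / 2) ^ m * (R ^ (β * m) * Real.exp (-R)) := by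
        rw [R_rpow, mul_pow, Real.exp_neg, div_pow, one_pow]
        field_simp
    _ ≤ Real.exp R * (1 / 2) ^ m * Real.Gamma (β * m + 1) := by
        gcongr
        exact rpow_mul_exp_neg_le_Gamma R_nonneg (by positivity)

theorem factorial_mul_choose_eq_prod_range {R : Type*} [CommRing R] [BinomialRing R]
    (s : R) (n : ℕ) : n.factorial * Ring.choose s n = ∏ j ∈ Finset.range n, (s - j) := by
  rw [← nsmul_eq_mul, ← Ring.descPochhammer_eq_factorial_smul_choose,
    ← descPochhammer_eval_eq_prod_range, ← descPochhammer_map (Int.castRingHom R),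
    Polynomial.eval_map, ← Polynomial.eval₂_smulOneHom_eq_smeval]
  congr 1
  exact RingHom.ext_int _ _

theorem abs_choose_le_neg_one_pow_mul_choose_neg_abs (s : ℝ) (n : ℕ) :
    |Ring.choose s n| ≤ (-1) ^ n * Ring.choose (-|s|) n := by
  refine le_of_mul_le_mul_left ?_ (Nat.cast_pos.mpr n.factorial_pos : (0 : ℝ) < n.factorial)
  calc (n.factorial : ℝ) * |Ring.choose s n| = ∏ j ∈ Finset.range n, |s - j| := by
        rw [← Finset.abs_prod, ← factorial_mul_choose_eq_prod_range, abs_mul, Nat.abs_cast]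
    _ ≤ ∏ j ∈ Finset.range n, (-1) * (-|s| - j) := by
        refine Finset.prod_le_prod (fun _ _ ↦ abs_nonneg _) fun j _ ↦ (abs_sub s j).trans_eq ?_
        rw [Nat.abs_cast]
        ring
    _ = n.factorial * ((-1) ^ n * Ring.choose (-|s|) n) := by
        rw [Finset.prod_mul_distrib, ← factorial_mul_choose_eq_prod_range, Finset.prod_const,
          Finset.card_range]
        ring

theorem hasSum_choose_mul_pow (s : ℝ) {x : ℝ} (hx : |x| < 1) :
    HasSum (fun n ↦ Ring.choose s n * x ^ n) ((1 + x) ^ s) := by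
  have mem_eball : x ∈ Metric.eball (0 : ℝ) 1 := by
    simpa [← ENNReal.ofReal_one, Metric.eball_ofReal] using hx
  simpa [binomialSeries, FormalMultilinearSeries.ofScalars, mul_comm] using
    (Real.one_add_rpow_hasFPowerSeriesOnBall_zero (a := s)).hasSum mem_eball

theorem iteratedDeriv_eq_factorial_mul_of_hasSum {𝕜 : Type*} [NontriviallyNormedField 𝕜]
    [CompleteSpace 𝕜] [CharZero 𝕜] {f : 𝕜 → 𝕜} {c : ℕ → 𝕜} {x₀ : 𝕜}
    (hf : ∀ᶠ x in 𝓝 0, HasSum (fun n ↦ c n * x ^ n) (f (x₀ + x))) (n : ℕ) :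
    iteratedDeriv n f x₀ = n.factorial * c n := by
  have hasFPowerSeriesAt : HasFPowerSeriesAt f (.ofScalars 𝕜 c) x₀ := by
    simpa only [hasFPowerSeriesAt_iff, FormalMultilinearSeries.coeff_ofScalars, smul_eq_mul,
      mul_comm] using hf
  have coeff_eq := congrArg (fun p ↦ FormalMultilinearSeries.coeff p n)
    (hasFPowerSeriesAt.analyticAt.hasFPowerSeriesAt.eq_formalMultilinearSeries hasFPowerSeriesAt)
  simp only [FormalMultilinearSeries.coeff_ofScalars] at coeff_eq
  rw [← coeff_eq, mul_div_cancel₀ _ (Nat.cast_ne_zero.mpr n.factorial_ne_zero)]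

section SumOfPowers

variable {ι : Type*} {a s : ι → ℝ} {r : ℝ}

theorem summable_prod_mul_choose_mul_pow (hr : r < 1)
    (ha : Summable fun i ↦ |a i| * (1 - r) ^ (-|s i|)) {x : ℝ} (hx : |x| ≤ r) :
    Summable fun p : ι × ℕ ↦ a p.1 * Ring.choose (s p.1) p.2 * x ^ p.2 := by
  have r_nonneg : 0 ≤ r := (abs_nonneg x).trans hx
  set majorant : ι × ℕ → ℝ := fun p ↦ |a p.1| * (Ring.choose (-|s p.1|) p.2 * (-r) ^ p.2)
  have le_majorant (p : ι × ℕ) : ‖a p.1 * Ring.choose (s p.1) p.2 * x ^ p.2‖ ≤ majorant p := by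
    calc _ = |a p.1| * (|Ring.choose (s p.1) p.2| * |x| ^ p.2) := by
          rw [Real.norm_eq_abs, abs_mul, abs_mul, abs_pow, mul_assoc]
      _ ≤ |a p.1| * ((-1) ^ p.2 * Ring.choose (-|s p.1|) p.2 * r ^ p.2) := by
          have choose_le := abs_choose_le_neg_one_pow_mul_choose_neg_abs (s p.1) p.2
          have coeff_nonneg := (abs_nonneg _).trans choose_le
          gcongr
      _ = majorant p := by
          rw [mul_right_comm, ← mul_pow, neg_one_mul, mul_comm (_ ^ _)]
  have hasSum_majorant (i : ι) :
      HasSum (fun n ↦ majorant (i, n)) (|a i| * (1 - r) ^ (-|s i|)) :=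
    (hasSum_choose_mul_pow _ (by rwa [abs_neg, abs_of_nonneg r_nonneg])).mul_left _
  refine .of_norm_bounded ?_ le_majorant
  rw [summable_prod_of_nonneg fun p ↦ (norm_nonneg _).trans (le_majorant p)]
  exact ⟨fun i ↦ (hasSum_majorant i).summable,
    ha.congr fun i ↦ (hasSum_majorant i).tsum_eq.symm⟩

theorem summable_mul_prod_range_sub (hr₀ : 0 < r) (hr₁ : r < 1)
    (ha : Summable fun i ↦ |a i| * (1 - r) ^ (-|s i|)) (n : ℕ) :
    Summable fun i ↦ a i * ∏ j ∈ Finset.range n, (s i - j) := by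
  have summable_prod := summable_prod_mul_choose_mul_pow hr₁ ha (abs_of_pos hr₀).le
  have summable_choose : Summable fun i ↦ a i * Ring.choose (s i) n :=
    (summable_mul_right_iff (pow_ne_zero n hr₀.ne')).mp (summable_prod.prod_symm.prod_factor n)
  simpa only [← factorial_mul_choose_eq_prod_range, mul_left_comm] using
    summable_choose.mul_left (n.factorial : ℝ)

theorem hasSum_tsum_mul_choose_mul_pow (hr : r < 1)
    (ha : Summable fun i ↦ |a i| * (1 - r) ^ (-|s i|)) {x : ℝ} (hx : |x| ≤ r) :
    HasSum (fun n ↦ (∑' i, a i * Ring.choose (s i) n) * x ^ n) (∑' i, a i * (1 + x) ^ s i) := by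
  have summable_prod := summable_prod_mul_choose_mul_pow hr ha hx
  have sum_rows : ∑' i, a i * (1 + x) ^ s i =
      ∑' p : ι × ℕ, a p.1 * Ring.choose (s p.1) p.2 * x ^ p.2 := by
    rw [summable_prod.tsum_prod]
    refine tsum_congr fun i ↦ ?_
    simp only [mul_assoc, tsum_mul_left, (hasSum_choose_mul_pow (s i) (hx.trans_lt hr)).tsum_eq]
  rw [sum_rows, ← (Equiv.prodComm ℕ ι).tsum_eq]
  simp only [← tsum_mul_right]
  exact summable_prod.prod_symm.hasSum.prod_fiberwise
    fun n ↦ (summable_prod.prod_symm.prod_factor n).hasSum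

theorem iteratedDeriv_tsum_mul_one_add_rpow (hr₀ : 0 < r) (hr₁ : r < 1)
    (ha : Summable fun i ↦ |a i| * (1 - r) ^ (-|s i|)) (n : ℕ) :
    iteratedDeriv n (fun x ↦ ∑' i, a i * (1 + x) ^ s i) 0 =
      ∑' i, a i * ∏ j ∈ Finset.range n, (s i - j) := by
  have abs_le_near_zero : ∀ᶠ x : ℝ in 𝓝 0, |x| ≤ r :=
    continuous_abs.continuousAt.eventually_le_const (by simpa using hr₀)
  rw [iteratedDeriv_eq_factorial_mul_of_hasSum (c := fun n ↦ ∑' i, a i * Ring.choose (s i) n)]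
  · simp only [← tsum_mul_left, ← factorial_mul_choose_eq_prod_range, mul_left_comm]
  · filter_upwards [abs_le_near_zero] with x hx
    simpa only [zero_add] using hasSum_tsum_mul_choose_mul_pow hr₁ ha hx

end SumOfPowers

theorem mittagLefflerOne_mul_rpow (α β z : ℝ) {x : ℝ} (hx : 0 ≤ x) :
    mittagLefflerOne β (z * x ^ α) =
      ∑' m : ℕ, z ^ m / Real.Gamma (β * m + 1) * x ^ (α * m) := by
  refine tsum_congr fun m ↦ ?_
  rw [mul_pow, Real.rpow_mul_natCast hx, mul_div_right_comm]

theorem summable_abs_pow_div_Gamma_mul_rpow (α : ℝ) {β : ℝ} (hβ : 0 < β) (z : ℝ) {y : ℝ}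
    (hy : 0 ≤ y) :
    Summable fun m : ℕ ↦ |z ^ m / Real.Gamma (β * m + 1)| * y ^ (-|α * m|) := by
  refine (summable_pow_div_Gamma hβ (|z| * y ^ (-|α|))).congr fun m ↦ ?_
  have Gamma_pos : 0 < Real.Gamma (β * m + 1) := Real.Gamma_pos_of_pos (by positivity)
  rw [abs_div, abs_pow, abs_of_pos Gamma_pos, abs_mul, Nat.abs_cast, ← neg_mul,
    Real.rpow_mul_natCast hy, mul_pow, mul_div_right_comm]

theorem iteratedDeriv_mittagLefflerOne_mul_one_sub_rpow (α : ℝ) {β : ℝ} (hβ : 0 < β) (z : ℝ)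
    (n : ℕ) :
    iteratedDeriv n (fun u ↦ mittagLefflerOne β (z * (1 - u) ^ α)) 0 =
      (-1) ^ n * ∑' m : ℕ, z ^ m / Real.Gamma (β * m + 1) *
        ∏ j ∈ Finset.range n, (α * m - j) := by
  set F : ℝ → ℝ := fun x ↦ ∑' m : ℕ, z ^ m / Real.Gamma (β * m + 1) * (1 + x) ^ (α * m)
  have eventually_eq : (fun u ↦ mittagLefflerOne β (z * (1 - u) ^ α)) =ᶠ[𝓝 0] fun u ↦ F (-u) := by
    filter_upwards [eventually_le_nhds one_pos] with u hu
    rw [mittagLefflerOne_mul_rpow α β z (sub_nonneg.mpr hu), sub_eq_add_neg]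
  rw [eventually_eq.iteratedDeriv_eq, iteratedDeriv_comp_neg, neg_zero, smul_eq_mul,
    iteratedDeriv_tsum_mul_one_add_rpow one_half_pos one_half_lt_one
      (summable_abs_pow_div_Gamma_mul_rpow α hβ z (by norm_num))]

theorem space_time_fractional_poisson_state_probabilities_general (α : ℝ) {β : ℝ} (hβ : 0 < β)
    (z : ℝ) (n : ℕ) :
    Summable (fun m : ℕ ↦ |z ^ m / Real.Gamma (β * m + 1) *
        ∏ j ∈ Finset.range n, (α * (m : ℝ) - (j : ℝ))|) ∧
    (1 / (n.factorial : ℝ)) * iteratedDeriv n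
        (fun u : ℝ ↦ mittagLefflerOne β (z * (1 - u) ^ α)) 0
      = ((-1 : ℝ) ^ n / (n.factorial : ℝ)) * ∑' m : ℕ,
          z ^ m / Real.Gamma (β * m + 1) * ∏ j ∈ Finset.range n, (α * (m : ℝ) - (j : ℝ)) := by
  constructor
  · exact (summable_mul_prod_range_sub one_half_pos one_half_lt_one
      (summable_abs_pow_div_Gamma_mul_rpow α hβ z (by norm_num)) n).abs
  · rw [iteratedDeriv_mittagLefflerOne_mul_one_sub_rpow α hβ z n]
    ring

/-- For `α, β ∈ (0,1]`, `ξ > 0`, `t ≥ 0`, `n ≥ 0`: the series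
`Σ_{m=0}^∞ (−ξt^β)^m/Γ(βm+1) · ∏_{j=0}^{n−1}(αm − j)` converges absolutely, and the
`n`-th Taylor coefficient at `u = 0` of `u ↦ E_β(−ξ t^β (1−u)^α)` equals
`((−1)^n/n!) Σ_{m=0}^∞ (−ξt^β)^m/Γ(βm+1) · ∏_{j=0}^{n−1}(αm − j)` — the state
probabilities of the space-time fractional Poisson process. -/
theorem space_time_fractional_poisson_state_probabilities (α β ξ t : ℝ) (n : ℕ)
    (hα : α ∈ Set.Ioc (0 : ℝ) 1) (hβ : β ∈ Set.Ioc (0 : ℝ) 1) (hξ : 0 < ξ) (ht : 0 ≤ t) :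
    Summable (fun m : ℕ => |(-(ξ * t ^ β)) ^ m / Real.Gamma (β * m + 1) *
        ∏ j ∈ Finset.range n, (α * (m : ℝ) - (j : ℝ))|) ∧
    (1 / (n.factorial : ℝ)) * iteratedDeriv n
        (fun u : ℝ => mittagLefflerOne β (-(ξ * t ^ β * (1 - u) ^ α))) 0
      = ((-1 : ℝ) ^ n / (n.factorial : ℝ)) * ∑' m : ℕ,
          (-(ξ * t ^ β)) ^ m / Real.Gamma (β * m + 1) *
            ∏ j ∈ Finset.range n, (α * (m : ℝ) - (j : ℝ)) := by
  simpa only [neg_mul] using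
    space_time_fractional_poisson_state_probabilities_general α hβ.1 (-(ξ * t ^ β)) n
end
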